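/- arXiv:2408.10223 — 3 statements merged into one kernel-verified Lean document; each statement's English description precedes it below -/
import Mathlib

section
/- Fix a grid step h > 0 and a reference point x ∈ ℝ. For all real numbers A, a, B, c, C there exists a unique polynomial q with real coefficients of degree at most 4 such that the cell averages of q over [x − 2h, x − h], [x − h, x], [x, x + h] equal A, B, C respectively, and q(x − h) = a, q(x) = c. -/
open intervalIntegral

/-!
A homogeneous solution `q` of the problem is the derivative of a polynomial `Q` which vanishes at
the first node. Vanishing cell averages of `q` propagate this zero to every node, and a zero of `q`
at a node makes it a double zero of `Q`. For `n` cells and `m` point values, `Q` thus has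
`n + 1 + m` zeros but degree at most `n + m`, so `Q = 0` and `q = 0`. There are as many conditions
as coefficients, so uniqueness gives existence.
-/

open Finset Polynomial

section LinearAlgebra

variable {K V W : Type*} [DivisionRing K] [AddCommGroup V] [Module K V] [AddCommGroup W]
  [Module K W]

theorem existsUnique_mem_and_apply_eq_of_finrank_eq {U : Submodule K V} [FiniteDimensional K U]
    [FiniteDimensional K W] (hdim : Module.finrank K U = Module.finrank K W) {L : V →ₗ[K] W}
    (hL : ∀ u ∈ U, L u = 0 → u = 0) (w : W) : ∃! u, u ∈ U ∧ L u = w := by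
  have hinj : Function.Injective (L.domRestrict U) :=
    (injective_iff_map_eq_zero _).2 fun u hu ↦ Subtype.ext (hL u u.2 hu)
  have hsurj := (LinearMap.injective_iff_surjective_of_finrank_eq_finrank hdim).1 hinj
  obtain ⟨u, hu⟩ := hsurj w
  refine ⟨u, ⟨u.2, hu⟩, fun v ⟨hvU, hv⟩ ↦ ?_⟩
  exact congrArg Subtype.val (@hinj ⟨v, hvU⟩ u (hv.trans hu.symm))

end LinearAlgebra

section Polynomial

theorem eq_zero_of_degree_lt_of_eval_eq_zero_of_eval_derivative_eq_zero {R : Type*} [CommRing R]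
    [IsDomain R] {s t : Finset R} (hts : t ⊆ s) {p : R[X]} (hdeg : p.degree < (#s + #t : ℕ))
    (hs : ∀ a ∈ s, p.eval a = 0) (ht : ∀ a ∈ t, p.derivative.eval a = 0) : p = 0 := by
  classical
  by_contra hp
  have hroots : s.val + t.val ≤ p.roots := by
    refine Multiset.le_iff_count.2 fun a ↦ ?_
    rw [Multiset.count_add, Multiset.count_eq_of_nodup s.nodup,
      Multiset.count_eq_of_nodup t.nodup, count_roots]
    by_cases hat : a ∈ t
    · simpa [hat, hts hat] using Nat.succ_le_of_lt <|
        (one_lt_rootMultiplicity_iff_isRoot hp).2 ⟨hs a (hts hat), ht a hat⟩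
    · by_cases has : a ∈ s
      · simpa [hat, has, Nat.succ_le_iff] using (rootMultiplicity_pos hp).2 (hs a has)
      · simp [hat, has]
  have hcard : #s + #t ≤ p.natDegree := by
    simpa using (Multiset.card_le_card hroots).trans p.card_roots'
  exact ((natDegree_lt_iff_degree_lt hp).2 hdeg).not_ge hcard

variable {K : Type*} [DivisionRing K] [CharZero K]

theorem exists_derivative_eq (q : K[X]) : ∃ Q : K[X], derivative Q = q := by
  induction q using Polynomial.induction_on' with
  | add p q hp hq =>
    obtain ⟨P, rfl⟩ := hp
    obtain ⟨Q, rfl⟩ := hq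
    exact ⟨P + Q, derivative_add⟩
  | monomial n a =>
    refine ⟨monomial (n + 1) (a / (n + 1)), ?_⟩
    rw [derivative_monomial, Nat.cast_succ, div_mul_cancel₀ _ n.cast_add_one_ne_zero,
      Nat.add_sub_cancel]

theorem exists_derivative_eq_and_eval_eq_zero (q : K[X]) (a : K) :
    ∃ Q : K[X], derivative Q = q ∧ Q.eval a = 0 := by
  obtain ⟨Q, rfl⟩ := exists_derivative_eq q
  exact ⟨Q - C (Q.eval a), by simp, by simp⟩

theorem degree_lt_succ_of_degree_derivative_lt {R : Type*} [Semiring R] [NoZeroDivisors R]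
    [CharZero R] {p : R[X]} {n : ℕ} (h : (derivative p).degree < n) :
    p.degree < (n + 1 : ℕ) := by
  rw [degree_lt_iff_coeff_zero] at h ⊢
  intro m hm
  obtain ⟨k, rfl⟩ := Nat.exists_eq_add_of_le' (Nat.one_le_of_lt hm)
  have hcoeff := h k (by lia)
  rw [coeff_derivative] at hcoeff
  exact (mul_eq_zero.1 hcoeff).resolve_right k.cast_add_one_ne_zero

end Polynomial

section CellAverage

/-- The average of a polynomial over the cell with endpoints `a` and `b`, as a linear functional.
Interval averages do not depend on the order of the endpoints. -/
noncomputable def cellAverage (a b : ℝ) : ℝ[X] →ₗ[ℝ] ℝ where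
  toFun q := ⨍ s in a..b, q.eval s
  map_add' p q := by
    simp only [interval_average_eq, eval_add, ← smul_add]
    rw [integral_add (p.continuous.intervalIntegrable a b) (q.continuous.intervalIntegrable a b)]
  map_smul' c q := by
    simp only [interval_average_eq, eval_smul, integral_smul, smul_comm c, RingHom.id_apply]

theorem cellAverage_apply (a b : ℝ) (q : ℝ[X]) : cellAverage a b q = ⨍ s in a..b, q.eval s :=
  rfl

theorem cellAverage_derivative (a b : ℝ) (Q : ℝ[X]) :
    cellAverage a b (derivative Q) = (Q.eval b - Q.eval a) / (b - a) := by
  rw [cellAverage_apply, interval_average_eq_div, integral_eq_sub_of_hasDerivAt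
    (fun s _ ↦ Q.hasDerivAt s) ((derivative Q).continuous.intervalIntegrable a b)]

end CellAverage

section Unisolvence

variable {n : ℕ} {t : Fin (n + 1) → ℝ}

/-- The data prescribed in Hermite–Birkhoff interpolation on the stencil with nodes `t`: the
averages of a polynomial over the cells between consecutive nodes, and its values at the nodes
indexed by `S`. -/
noncomputable def stencilData (t : Fin (n + 1) → ℝ) (S : Finset (Fin (n + 1))) :
    ℝ[X] →ₗ[ℝ] (Fin n → ℝ) × (S → ℝ) :=
  (LinearMap.pi fun i ↦ cellAverage (t i.castSucc) (t i.succ)).prod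
    (LinearMap.pi fun j ↦ leval (t j))

theorem stencilData_eq_iff {S : Finset (Fin (n + 1))} {q : ℝ[X]} {A : Fin n → ℝ}
    {v : Fin (n + 1) → ℝ} : stencilData t S q = (A, fun j : S ↦ v j) ↔
      (∀ i : Fin n, cellAverage (t i.castSucc) (t i.succ) q = A i) ∧
        ∀ j ∈ S, q.eval (t j) = v j := by
  simp [stencilData, leval, funext_iff]

theorem eval_eq_zero_of_cellAverage_derivative_eq_zero (ht : Function.Injective t) {Q : ℝ[X]}
    (h0 : Q.eval (t 0) = 0)
    (hQ : ∀ i : Fin n, cellAverage (t i.castSucc) (t i.succ) (derivative Q) = 0)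
    (i : Fin (n + 1)) : Q.eval (t i) = 0 := by
  induction i using Fin.induction with
  | zero => exact h0
  | succ i ih =>
    have hne : t i.succ - t i.castSucc ≠ 0 := sub_ne_zero.2 (ht.ne i.castSucc_lt_succ.ne')
    simpa [cellAverage_derivative, ih, hne] using hQ i

theorem eq_zero_of_cellAverage_eq_zero_of_eval_eq_zero (ht : Function.Injective t)
    {S : Finset (Fin (n + 1))} {q : ℝ[X]} (hdeg : q.degree < (n + #S : ℕ))
    (havg : ∀ i : Fin n, cellAverage (t i.castSucc) (t i.succ) q = 0)
    (hval : ∀ j ∈ S, q.eval (t j) = 0) : q = 0 := by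
  obtain ⟨Q, rfl, hQ0⟩ := exists_derivative_eq_and_eval_eq_zero q (t 0)
  have hnodes := eval_eq_zero_of_cellAverage_derivative_eq_zero ht hQ0 havg
  have hQdeg : Q.degree < (#(univ.image t) + #(S.image t) : ℕ) := by
    rw [card_image_of_injective _ ht, card_image_of_injective _ ht, card_fin, Nat.add_right_comm]
    exact degree_lt_succ_of_degree_derivative_lt hdeg
  have hQ : Q = 0 := eq_zero_of_degree_lt_of_eval_eq_zero_of_eval_derivative_eq_zero
    (image_subset_image S.subset_univ) hQdeg (by simpa using hnodes) (by simpa using hval)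
  rw [hQ, derivative_zero]

theorem stmt_2_general (ht : Function.Injective t) (S : Finset (Fin (n + 1))) (A : Fin n → ℝ)
    (v : Fin (n + 1) → ℝ) :
    ∃! q : ℝ[X], q ∈ degreeLT ℝ (n + #S) ∧
      (∀ i : Fin n, ⨍ s in t i.castSucc..t i.succ, q.eval s = A i) ∧
      ∀ j ∈ S, q.eval (t j) = v j := by
  have hdim : Module.finrank ℝ (degreeLT ℝ (n + #S)) =
      Module.finrank ℝ ((Fin n → ℝ) × (S → ℝ)) := by
    simp [(degreeLTEquiv ℝ (n + #S)).finrank_eq]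
  have : FiniteDimensional ℝ (degreeLT ℝ (n + #S)) :=
    (degreeLTEquiv ℝ (n + #S)).symm.finiteDimensional
  have hker (q : ℝ[X]) (hq : q ∈ degreeLT ℝ (n + #S)) (hq0 : stencilData t S q = 0) : q = 0 :=
    let ⟨havg, hval⟩ := (stencilData_eq_iff (A := 0) (v := 0)).1 hq0
    eq_zero_of_cellAverage_eq_zero_of_eval_eq_zero ht (mem_degreeLT.1 hq) havg hval
  simpa only [stencilData_eq_iff, cellAverage_apply] using
    existsUnique_mem_and_apply_eq_of_finrank_eq hdim hker (A, fun j : S ↦ v j)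

end Unisolvence

/-- Unisolvence of the CFWENO5 (r = 3) big-stencil Hermite–Birkhoff interpolation:
three consecutive cell averages and the two endpoint values of the middle cell
determine a unique quartic. -/
theorem stmt_2 (h : ℝ) (hh : 0 < h) (x A a B c C : ℝ) :
    ∃! q : Polynomial ℝ, q.natDegree ≤ 4 ∧
      (1 / h) * ∫ s in (x - 2*h)..(x - h), q.eval s = A ∧
      (1 / h) * ∫ s in (x - h)..x, q.eval s = B ∧
      (1 / h) * ∫ s in x..(x + h), q.eval s = C ∧
      q.eval (x - h) = a ∧
      q.eval x = c := by
  have ht : StrictMono ![x - 2 * h, x - h, x, x + h] := by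
    have hlt : x - 2 * h < x - h := by linarith
    simp [hlt, hh]
  have hdeg (q : ℝ[X]) :
      q ∈ degreeLT ℝ (3 + ({1, 2} : Finset (Fin 4)).card) ↔ q.natDegree ≤ 4 := by
    change q ∈ degreeLT ℝ (4 + 1) ↔ _
    rw [degreeLT_succ_eq_degreeLE, mem_degreeLE, natDegree_le_iff_degree_le]
  have hwidth : x - h - (x - 2 * h) = h := by ring
  have hdata := stmt_2_general ht.injective {1, 2} ![A, B, C] ![0, a, c, 0]
  simp only [hdeg] at hdata
  simpa [Fin.forall_fin_succ, interval_average_eq, hwidth, and_assoc] using hdata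
end

section
/- Fix a grid step h > 0, a reference point x ∈ ℝ, real numbers A, a, B, c, C, and a real ν ≠ 0. Let p₀ be the unique polynomial of degree ≤ 2 with cell averages A over [x − 2h, x − h] and B over [x − h, x] and p₀(x − h) = a; let p₁ be the unique polynomial of degree ≤ 2 with p₁(x − h) = a, cell average B over [x − h, x], and p₁(x) = c; let p₂ be the unique polynomial of degree ≤ 2 with cell average B over [x − h, x], p₂(x) = c, and cell average C over [x, x + h]; and let q be the unique polynomial of degree ≤ 4 with cell averages A, B, C over [x − 2h, x − h], [x − h, x], [x, x + h] and q(x − h) = a, q(x) = c. Then, with γ̄₀ = ν(1 + ν)/6, γ̄₁ = (1 + ν)(2 − ν)/3, γ̄₂ = (1 − ν)(2 − ν)/6, one has γ̄₀ + γ̄₁ + γ̄₂ = 1 and (1/(νh))·∫_{x−νh}^{x} q = γ̄₀·(1/(νh))·∫_{x−νh}^{x} p₀ + γ̄₁·(1/(νh))·∫_{x−νh}^{x} p₁ + γ̄₂·(1/(νh))·∫_{x−νh}^{x} p₂. -/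
open intervalIntegral

/-!
Replace each reconstruction polynomial by its primitive vanishing at the reference interface. A cell
average then fixes a value of the primitive at a cell interface and a point value fixes its
derivative there, so Hermite–Birkhoff interpolation becomes ordinary Hermite interpolation: the
primitive `Q` of `q` has nodes of multiplicities `(1, 2, 2, 1)`, and the primitives `P j` of the
sub-stencil polynomials have multiplicities `(1, 2, 1, 0)`, `(0, 2, 2, 0)`, `(0, 1, 2, 1)`.

As functions of the evaluation point, the weights `γ j` are quadratic polynomials with sum `1`, and
`γ j` vanishes at exactly the nodes that `P j` misses. Hence each `γ j * (Q - P j)` vanishes at all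
six nodes, counted with multiplicity, and so does their sum `Q - ∑ j, γ j * P j`, which has degree
at most five.
-/

open Polynomial Lagrange

section HermiteInterpolation

/-- The nodal polynomial of Hermite interpolation, vanishing at the node `y i` to order `m i`.
A polynomial `P` is a Hermite interpolant of `Q` for these nodes when
`hermiteNodal y m ∣ Q - P`; multiplicity `0` means that the node is not used. -/
noncomputable def hermiteNodal {ι R : Type*} [Fintype ι] [CommRing R] (y : ι → R) (m : ι → ℕ) :
    R[X] :=
  ∏ i, (X - C (y i)) ^ m i

section Nodal

variable {ι R : Type*} [Fintype ι] [CommRing R]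

lemma hermiteNodal_add (y : ι → R) (m n : ι → ℕ) :
    hermiteNodal y (m + n) = hermiteNodal y m * hermiteNodal y n := by
  simp only [hermiteNodal, Pi.add_apply, pow_add, Finset.prod_mul_distrib]

lemma natDegree_hermiteNodal [Nontrivial R] (y : ι → R) (m : ι → ℕ) :
    (hermiteNodal y m).natDegree = ∑ i, m i := by
  rw [hermiteNodal, natDegree_prod_of_monic _ _ fun i _ ↦ (monic_X_sub_C (y i)).pow (m i)]
  simp only [(monic_X_sub_C _).natDegree_pow, natDegree_X_sub_C, mul_one]

theorem eq_sum_mul_of_hermiteNodal_dvd [IsDomain R] {κ : Type*} [Fintype κ] {y : ι → R}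
    {m n : κ → ι → ℕ} {M : ι → ℕ} (hM : ∀ j, m j + n j = M) {γ P : κ → R[X]} {Q : R[X]}
    (hγ : ∑ j, γ j = 1) (hγn : ∀ j, hermiteNodal y (n j) ∣ γ j)
    (hPm : ∀ j, hermiteNodal y (m j) ∣ Q - P j) {d : ℕ} (hd : d < ∑ i, M i)
    (hQ : Q.natDegree ≤ d) (hγP : ∀ j, (γ j * P j).natDegree ≤ d) :
    Q = ∑ j, γ j * P j := by
  have hsum : Q - ∑ j, γ j * P j = ∑ j, γ j * (Q - P j) := by
    simp only [mul_sub, Finset.sum_sub_distrib, ← Finset.sum_mul, hγ, one_mul]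
  have hdvd : hermiteNodal y M ∣ Q - ∑ j, γ j * P j := by
    rw [hsum]
    refine Finset.dvd_sum fun j _ ↦ ?_
    rw [← hM j, add_comm, hermiteNodal_add]
    exact mul_dvd_mul (hγn j) (hPm j)
  have hdeg : (Q - ∑ j, γ j * P j).natDegree ≤ d :=
    (natDegree_sub_le_of_le hQ (natDegree_sum_le_of_forall_le _ _ fun j _ ↦ hγP j)).trans_eq
      (max_self d)
  refine sub_eq_zero.mp (eq_zero_of_dvd_of_natDegree_lt hdvd ?_)
  rw [natDegree_hermiteNodal]
  exact hdeg.trans_lt hd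

end Nodal

lemma hermiteNodal_dvd {ι K : Type*} [Fintype ι] [Field K] {y : ι → K}
    (hy : Function.Injective y) {m : ι → ℕ} {p : K[X]} (h : ∀ i, (X - C (y i)) ^ m i ∣ p) :
    hermiteNodal y m ∣ p :=
  Finset.prod_dvd_of_coprime (fun _ _ _ _ hij ↦ (pairwise_coprime_X_sub_C hy hij).pow) fun i _ ↦ h i

lemma X_sub_C_sq_dvd_iff {R : Type*} [CommRing R] {p : R[X]} {a : R} :
    (X - C a) ^ 2 ∣ p ↔ p.eval a = 0 ∧ (derivative p).eval a = 0 := by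
  have coeff_one : (p.comp (X + C a)).coeff 1 = (derivative p).eval a := taylor_coeff_one a p
  have coeff_zero : (p.comp (X + C a)).coeff 0 = p.eval a := taylor_coeff_zero a p
  simp only [X_sub_C_pow_dvd_iff, X_pow_dvd_iff, Nat.forall_lt_succ_right, not_lt_zero,
    IsEmpty.forall_iff, implies_true, true_and, coeff_zero, coeff_one]

end HermiteInterpolation

section Primitive

lemma exists_derivative_eq_s9 {K : Type*} [Field K] [CharZero K] (p : K[X]) :
    ∃ P : K[X], derivative P = p := by
  induction p using Polynomial.induction_on' with
  | add p q hp hq =>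
    obtain ⟨P, rfl⟩ := hp
    obtain ⟨Q, rfl⟩ := hq
    exact ⟨P + Q, derivative_add⟩
  | monomial n a =>
    refine ⟨monomial (n + 1) (a / (n + 1)), ?_⟩
    rw [derivative_monomial_succ, div_mul_cancel₀ a n.cast_add_one_ne_zero]

lemma exists_derivative_eq_and_eval_eq_zero_s9 {K : Type*} [Field K] [CharZero K] (a : K) (p : K[X]) :
    ∃ P : K[X], derivative P = p ∧ P.eval a = 0 := by
  obtain ⟨P, rfl⟩ := exists_derivative_eq_s9 p
  exact ⟨P - C (P.eval a), by simp, by simp⟩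

lemma integral_eval_eq_sub_of_derivative_eq {P p : ℝ[X]} (hP : derivative P = p) (a b : ℝ) :
    ∫ s in a..b, p.eval s = P.eval b - P.eval a :=
  integral_eq_sub_of_hasDerivAt (fun s _ ↦ hP ▸ P.hasDerivAt s)
    (p.continuous.intervalIntegrable a b)

end Primitive

section Stencil

variable {K : Type*} [Field K]

/-- The linear weights of the three sub-stencils on a possibly nonuniform grid `y 0, …, y 3`, as
polynomials in the evaluation point. The outer two are Lagrange basis polynomials; the central one
is their complement to `1`, which vanishes at `y 0` and `y 3`. -/
noncomputable def stencilWeight (y : Fin 4 → K) : Fin 3 → K[X] :=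
  ![basisDivisor (y 0) (y 2) * basisDivisor (y 0) (y 3),
    1 - basisDivisor (y 0) (y 2) * basisDivisor (y 0) (y 3)
      - basisDivisor (y 3) (y 0) * basisDivisor (y 3) (y 1),
    basisDivisor (y 3) (y 0) * basisDivisor (y 3) (y 1)]

/-- The order to which the primitive of the `j`-th sub-stencil polynomial interpolates at each of
the four interfaces: `1` for its value, `2` for its value and derivative. -/
def stencilMultiplicity : Fin 3 → Fin 4 → ℕ :=
  ![![1, 2, 1, 0], ![0, 2, 2, 0], ![0, 1, 2, 1]]

/-- The node multiplicities of the big stencil that the `j`-th sub-stencil lacks, and which its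
weight has to supply. -/
def missingMultiplicity : Fin 3 → Fin 4 → ℕ :=
  ![![0, 0, 1, 1], ![1, 0, 0, 1], ![1, 1, 0, 0]]

lemma stencilMultiplicity_add_missingMultiplicity (j : Fin 3) :
    stencilMultiplicity j + missingMultiplicity j = ![1, 2, 2, 1] := by
  revert j
  decide

lemma sum_stencilWeight (y : Fin 4 → K) : ∑ j, stencilWeight y j = 1 := by
  simp only [Fin.sum_univ_three, stencilWeight, Matrix.cons_val]
  ring

lemma natDegree_basisDivisor_mul_le (a b c d : K) :
    (basisDivisor a b * basisDivisor c d).natDegree ≤ 2 := by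
  unfold basisDivisor
  compute_degree

lemma natDegree_stencilWeight_le (y : Fin 4 → K) (j : Fin 3) :
    (stencilWeight y j).natDegree ≤ 2 := by
  have h := natDegree_basisDivisor_mul_le (K := K)
  fin_cases j
  · exact h _ _ _ _
  · exact (natDegree_sub_le_of_le (natDegree_sub_le_of_le natDegree_one.le (h _ _ _ _))
      (h _ _ _ _)).trans (by decide)
  · exact h _ _ _ _

lemma hermiteNodal_dvd_stencilWeight {y : Fin 4 → K} (hy : Function.Injective y) (j : Fin 3) :
    hermiteNodal y (missingMultiplicity j) ∣ stencilWeight y j := by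
  have h02 : y 0 ≠ y 2 := hy.ne (by decide)
  have h03 : y 0 ≠ y 3 := hy.ne (by decide)
  have h31 : y 3 ≠ y 1 := hy.ne (by decide)
  refine hermiteNodal_dvd hy fun i ↦ ?_
  fin_cases j <;> fin_cases i <;>
    simp [missingMultiplicity, stencilWeight, dvd_iff_isRoot, eval_basisDivisor_left_of_ne,
      h02, h03, h03.symm, h31]

theorem eq_sum_stencilWeight_mul {y : Fin 4 → K} (hy : Function.Injective y)
    {P : Fin 3 → K[X]} {Q : K[X]} (hP : ∀ j, (P j).natDegree ≤ 3) (hQ : Q.natDegree ≤ 5)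
    (hPQ : ∀ j, hermiteNodal y (stencilMultiplicity j) ∣ Q - P j) :
    Q = ∑ j, stencilWeight y j * P j :=
  eq_sum_mul_of_hermiteNodal_dvd stencilMultiplicity_add_missingMultiplicity (sum_stencilWeight y)
    (hermiteNodal_dvd_stencilWeight hy) hPQ (by decide) hQ
    fun j ↦ natDegree_mul_le_of_le (natDegree_stencilWeight_le y j) (hP j)

theorem integral_eq_sum_stencilWeight_mul {y : Fin 4 → ℝ} (hy : Function.Injective y)
    {p : Fin 3 → ℝ[X]} {q : ℝ[X]} (hp : ∀ j, (p j).natDegree ≤ 2) (hq : q.natDegree ≤ 4)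
    (hleft : ∫ s in y 0..y 1, (p 0).eval s = ∫ s in y 0..y 1, q.eval s)
    (hcentral : ∀ j, ∫ s in y 1..y 2, (p j).eval s = ∫ s in y 1..y 2, q.eval s)
    (hright : ∫ s in y 2..y 3, (p 2).eval s = ∫ s in y 2..y 3, q.eval s)
    (h₀₁ : (p 0).eval (y 1) = q.eval (y 1)) (h₁₁ : (p 1).eval (y 1) = q.eval (y 1))
    (h₁₂ : (p 1).eval (y 2) = q.eval (y 2)) (h₂₂ : (p 2).eval (y 2) = q.eval (y 2)) (t : ℝ) :
    ∫ s in t..y 2, q.eval s =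
      ∑ j, (stencilWeight y j).eval t * ∫ s in t..y 2, (p j).eval s := by
  choose F hF hFy using exists_derivative_eq_and_eval_eq_zero_s9 (y 2)
  have integral_eq (r : ℝ[X]) (a b : ℝ) := integral_eval_eq_sub_of_derivative_eq (hF r) a b
  have natDegree_F_le {r : ℝ[X]} {n : ℕ} (hr : r.natDegree ≤ n) : (F r).natDegree ≤ n + 1 := by
    have hFr := natDegree_derivative (F r)
    rw [hF] at hFr
    omega
  have hF₁ (j) : (F (p j)).eval (y 1) = (F q).eval (y 1) := by
    simpa only [integral_eq, hFy, zero_sub, neg_inj] using hcentral j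
  have hF₀ : (F (p 0)).eval (y 0) = (F q).eval (y 0) := by
    simpa only [integral_eq, hF₁, sub_right_inj] using hleft
  have hF₃ : (F (p 2)).eval (y 3) = (F q).eval (y 3) := by
    simpa only [integral_eq, hFy, sub_zero] using hright
  have hinterp (j) : hermiteNodal y (stencilMultiplicity j) ∣ F q - F (p j) := by
    refine hermiteNodal_dvd hy fun i ↦ ?_
    fin_cases j <;> fin_cases i <;>
      simp [stencilMultiplicity, X_sub_C_sq_dvd_iff, dvd_iff_isRoot, hF, hFy, hF₀, hF₁, hF₃,
        h₀₁, h₁₁, h₁₂, h₂₂]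
  have hFq : F q = ∑ j, stencilWeight y j * F (p j) :=
    eq_sum_stencilWeight_mul hy (fun j ↦ natDegree_F_le (hp j)) (natDegree_F_le hq) hinterp
  have hFqt : (F q).eval t = ∑ j, (stencilWeight y j).eval t * (F (p j)).eval t := by
    simpa only [eval_finsetSum, eval_mul] using congr_arg (eval t) hFq
  simp only [integral_eq, hFy, zero_sub, mul_neg, Finset.sum_neg_distrib, hFqt]

end Stencil

section UniformGrid

variable {K : Type*} [Field K]

/-- The four cell interfaces of the big stencil, for spacing `h` and reference interface `x`. -/
def uniformGrid (x h : K) : Fin 4 → K := ![x - 2 * h, x - h, x, x + h]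

lemma uniformGrid_strictMono [LinearOrder K] [IsStrictOrderedRing K] {h : K} (hh : 0 < h) (x : K) :
    StrictMono (uniformGrid x h) := by
  refine Fin.strictMono_iff_lt_succ.mpr ?_
  simp [Fin.forall_fin_succ, uniformGrid, hh]

lemma eval_stencilWeight_uniformGrid [CharZero K] {h : K} (hh : h ≠ 0) (x ν : K) (j : Fin 3) :
    (stencilWeight (uniformGrid x h) j).eval (x - ν * h) =
      ![ν * (1 + ν) / 6, (1 + ν) * (2 - ν) / 3, (1 - ν) * (2 - ν) / 6] j := by
  have h02 : x - 2 * h - x = -(2 * h) := by ring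
  have h03 : x - 2 * h - (x + h) = -(3 * h) := by ring
  have h30 : x + h - (x - 2 * h) = 3 * h := by ring
  have h31 : x + h - (x - h) = 2 * h := by ring
  fin_cases j <;>
    simp only [stencilWeight, uniformGrid, basisDivisor, Fin.mk_one, Fin.zero_eta, Fin.reduceFinMk,
      Matrix.cons_val, eval_mul, eval_sub, eval_one, eval_C, eval_X, h02, h03, h30, h31] <;>
    field_simp <;> ring

end UniformGrid

/-- Optimal linear weight identity of Table 1 for r = 3: the fifth-order
big-stencil average reconstruction is a linear combination of the three
third-order sub-stencil average reconstructions with ν-dependent weights. -/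
theorem stmt_9 (h : ℝ) (hh : 0 < h) (x A a B c C ν : ℝ) (hν : ν ≠ 0)
    (p₀ : Polynomial ℝ) (hdeg₀ : p₀.natDegree ≤ 2)
    (hp₀A : (1 / h) * ∫ s in (x - 2*h)..(x - h), p₀.eval s = A)
    (hp₀B : (1 / h) * ∫ s in (x - h)..x, p₀.eval s = B)
    (hp₀a : p₀.eval (x - h) = a)
    (p₁ : Polynomial ℝ) (hdeg₁ : p₁.natDegree ≤ 2)
    (hp₁a : p₁.eval (x - h) = a)
    (hp₁B : (1 / h) * ∫ s in (x - h)..x, p₁.eval s = B)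
    (hp₁c : p₁.eval x = c)
    (p₂ : Polynomial ℝ) (hdeg₂ : p₂.natDegree ≤ 2)
    (hp₂B : (1 / h) * ∫ s in (x - h)..x, p₂.eval s = B)
    (hp₂c : p₂.eval x = c)
    (hp₂C : (1 / h) * ∫ s in x..(x + h), p₂.eval s = C)
    (q : Polynomial ℝ) (hdegq : q.natDegree ≤ 4)
    (hqA : (1 / h) * ∫ s in (x - 2*h)..(x - h), q.eval s = A)
    (hqB : (1 / h) * ∫ s in (x - h)..x, q.eval s = B)
    (hqC : (1 / h) * ∫ s in x..(x + h), q.eval s = C)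
    (hqa : q.eval (x - h) = a)
    (hqc : q.eval x = c) :
    ν * (1 + ν) / 6 + (1 + ν) * (2 - ν) / 3 + (1 - ν) * (2 - ν) / 6 = 1 ∧
    (1 / (ν * h)) * ∫ s in (x - ν * h)..x, q.eval s
      = (ν * (1 + ν) / 6) * ((1 / (ν * h)) * ∫ s in (x - ν * h)..x, p₀.eval s)
        + ((1 + ν) * (2 - ν) / 3) * ((1 / (ν * h)) * ∫ s in (x - ν * h)..x, p₁.eval s)
        + ((1 - ν) * (2 - ν) / 6) * ((1 / (ν * h)) * ∫ s in (x - ν * h)..x, p₂.eval s) := by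
  have integral_eq {p r : ℝ[X]} {u v w : ℝ} (hp : (1 / h) * ∫ s in u..v, p.eval s = w)
      (hr : (1 / h) * ∫ s in u..v, r.eval s = w) :
      ∫ s in u..v, p.eval s = ∫ s in u..v, r.eval s :=
    mul_left_cancel₀ (one_div_ne_zero hh.ne') (hp.trans hr.symm)
  have key : ∫ s in (x - ν * h)..x, q.eval s =
      ν * (1 + ν) / 6 * (∫ s in (x - ν * h)..x, p₀.eval s)
        + (1 + ν) * (2 - ν) / 3 * (∫ s in (x - ν * h)..x, p₁.eval s)
        + (1 - ν) * (2 - ν) / 6 * ∫ s in (x - ν * h)..x, p₂.eval s := by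
    have hdeg : ∀ j, ((![p₀, p₁, p₂] : Fin 3 → ℝ[X]) j).natDegree ≤ 2 := by
      simp [Fin.forall_fin_succ, hdeg₀, hdeg₁, hdeg₂]
    have hcentral : ∀ j, ∫ s in (x - h)..x, (![p₀, p₁, p₂] j).eval s =
        ∫ s in (x - h)..x, q.eval s := by
      simp [Fin.forall_fin_succ, integral_eq hp₀B hqB, integral_eq hp₁B hqB, integral_eq hp₂B hqB]
    have hsum := integral_eq_sum_stencilWeight_mul (uniformGrid_strictMono hh x).injective hdeg
      hdegq (integral_eq hp₀A hqA) hcentral (integral_eq hp₂C hqC) (hp₀a.trans hqa.symm)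
      (hp₁a.trans hqa.symm) (hp₁c.trans hqc.symm) (hp₂c.trans hqc.symm) (x - ν * h)
    simp only [eval_stencilWeight_uniformGrid hh.ne', Fin.sum_univ_three] at hsum
    exact hsum
  exact ⟨by ring, by rw [key]; ring⟩
end

section
/- Let u be a polynomial with real coefficients of degree at most 3 and let c₃ be its coefficient of X³. Fix h > 0 and x ∈ ℝ, and let q be the unique polynomial of degree at most 2 with q(x − h) = u(x − h), cell average over [x − h, x] equal to that of u, and q(x) = u(x). Then for every real ν, u(x − νh) − q(x − νh) = (c₃/2)·ν·(1 − ν)·(2ν − 1)·h³. -/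
open intervalIntegral

/-!
The error `e = u - q` has degree at most `3`, `X ^ 3`-coefficient `c₃`, zeros at both endpoints of
the cell and integral zero over it. Simpson's rule is exact for cubics, so `e` also vanishes at the
midpoint. Its three zeros and its `X ^ 3`-coefficient determine it:
`e(t) = c₃ (t - (x - h)) (t - (x - h / 2)) (t - x)`.
-/

open Polynomial Finset

theorem eq_C_coeff_card_mul_nodal {R ι : Type*} [CommRing R] [IsDomain R] {s : Finset ι}
    {v : ι → R} (hvs : Set.InjOn v s) {p : R[X]} (hp : p.natDegree ≤ #s)
    (hroots : ∀ i ∈ s, p.eval (v i) = 0) :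
    p = C (p.coeff #s) * Lagrange.nodal s v := by
  have nodal_coeff : (Lagrange.nodal s v).coeff #s = 1 := by
    simpa only [Lagrange.natDegree_nodal] using
      (Lagrange.nodal_monic (s := s) (v := v)).coeff_natDegree
  refine eq_of_degree_sub_lt_of_eval_index_eq s hvs ?_ fun i hi ↦ ?_
  · rw [degree_lt_iff_coeff_zero]
    intro k hk
    rcases hk.eq_or_lt with rfl | hk
    · rw [coeff_sub, coeff_C_mul, nodal_coeff, mul_one, sub_self]
    · rw [coeff_sub, coeff_C_mul, coeff_eq_zero_of_natDegree_lt (hp.trans_lt hk),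
        coeff_eq_zero_of_natDegree_lt (Lagrange.natDegree_nodal.trans_lt hk), mul_zero, sub_zero]
  · rw [hroots i hi, eval_mul, Lagrange.eval_nodal_at_node hi, mul_zero]

theorem integral_eval_eq_sum_range' {p : ℝ[X]} {n : ℕ} (hn : p.natDegree < n) (a b : ℝ) :
    ∫ s in a..b, p.eval s
      = ∑ i ∈ range n, p.coeff i * ((b ^ (i + 1) - a ^ (i + 1)) / (i + 1)) := by
  simp only [eval_eq_sum_range' hn]
  rw [integral_finsetSum fun i _ ↦ Continuous.intervalIntegrable (by fun_prop) a b]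
  simp only [integral_const_mul, integral_pow]

theorem integral_eval_eq_simpson {p : ℝ[X]} (hp : p.natDegree ≤ 3) (a b : ℝ) :
    ∫ s in a..b, p.eval s
      = (b - a) / 6 * (p.eval a + 4 * p.eval ((a + b) / 2) + p.eval b) := by
  have hp' : p.natDegree < 4 := Nat.lt_succ_of_le hp
  rw [integral_eval_eq_sum_range' hp']
  simp only [eval_eq_sum_range' hp', sum_range_succ, sum_range_zero]
  push_cast
  ring

theorem eval_midpoint_eq_zero_of_integral_eq_zero {p : ℝ[X]} (hp : p.natDegree ≤ 3) {a b : ℝ}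
    (hab : a ≠ b) (ha : p.eval a = 0) (hb : p.eval b = 0) (hint : ∫ s in a..b, p.eval s = 0) :
    p.eval ((a + b) / 2) = 0 := by
  have hba : b - a ≠ 0 := sub_ne_zero.mpr hab.symm
  simpa [integral_eval_eq_simpson hp, ha, hb, hba] using hint

theorem eval_eq_coeff_mul_of_integral_eq_zero {p : ℝ[X]} (hp : p.natDegree ≤ 3)
    {a b : ℝ} (hab : a ≠ b) (ha : p.eval a = 0) (hb : p.eval b = 0)
    (hint : ∫ s in a..b, p.eval s = 0) (t : ℝ) :
    p.eval t = p.coeff 3 * ((t - a) * (t - (a + b) / 2) * (t - b)) := by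
  have hm : p.eval ((a + b) / 2) = 0 :=
    eval_midpoint_eq_zero_of_integral_eq_zero hp hab ha hb hint
  have ham : a ≠ (a + b) / 2 := fun h ↦ hab (by linarith)
  have hmb : (a + b) / 2 ≠ b := fun h ↦ hab (by linarith)
  have hcard : #{a, (a + b) / 2, b} = 3 := card_eq_three.mpr ⟨_, _, _, ham, hab, hmb, rfl⟩
  have hfactor : p = C (p.coeff 3) * Lagrange.nodal {a, (a + b) / 2, b} id := by
    simpa only [hcard] using eq_C_coeff_card_mul_nodal (s := {a, (a + b) / 2, b})
      (Set.injOn_id _) (hp.trans_eq hcard.symm) (by simp [ha, hm, hb])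
  calc p.eval t
      = p.coeff 3 * (Lagrange.nodal {a, (a + b) / 2, b} id).eval t := by
        conv_lhs => rw [hfactor, eval_C_mul]
    _ = p.coeff 3 * ((t - a) * (t - (a + b) / 2) * (t - b)) := by
        simp [Lagrange.eval_nodal, ham, hab, hmb, mul_assoc]

/-- Exact leading-error formula for the CFWENO3 big-stencil point-value
reconstruction on a cubic: the error is (c₃/2)·ν(1 − ν)(2ν − 1)·h³. -/
theorem stmt_15 (u : Polynomial ℝ) (hu : u.natDegree ≤ 3)
    (c₃ : ℝ) (hc₃ : c₃ = u.coeff 3)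
    (h : ℝ) (hh : 0 < h) (x : ℝ)
    (q : Polynomial ℝ) (hdeg : q.natDegree ≤ 2)
    (hqa : q.eval (x - h) = u.eval (x - h))
    (hqb : (1 / h) * ∫ s in (x - h)..x, q.eval s
            = (1 / h) * ∫ s in (x - h)..x, u.eval s)
    (hqc : q.eval x = u.eval x) :
    ∀ ν : ℝ,
      u.eval (x - ν * h) - q.eval (x - ν * h)
        = (c₃ / 2) * ν * (1 - ν) * (2*ν - 1) * h^3 := by
  intro ν
  have he_deg : (u - q).natDegree ≤ 3 := by
    simpa using natDegree_sub_le_of_le hu hdeg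
  have he_coeff : (u - q).coeff 3 = c₃ := by
    rw [coeff_sub, coeff_eq_zero_of_natDegree_lt (Nat.lt_succ_of_le hdeg), sub_zero, hc₃]
  have he_left : (u - q).eval (x - h) = 0 := by rw [eval_sub, hqa, sub_self]
  have he_right : (u - q).eval x = 0 := by rw [eval_sub, hqc, sub_self]
  have he_int : ∫ s in (x - h)..x, (u - q).eval s = 0 := by
    simp only [eval_sub]
    rw [integral_sub (u.continuous.intervalIntegrable _ _) (q.continuous.intervalIntegrable _ _),
      mul_left_cancel₀ (one_div_ne_zero hh.ne') hqb, sub_self]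
  rw [← eval_sub, eval_eq_coeff_mul_of_integral_eq_zero he_deg
    (sub_lt_self x hh).ne he_left he_right he_int, he_coeff]
  ring
end
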